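/- (Explicit radial stationary dead-core/blow-up profile) Let N ≥ 1 be an integer, p ≥ 2, 0 < q < 1, λ > 0 and x₀ ∈ ℝ^N. Set α₀ := p/(p−1−q) and let C > 0 satisfy C^{p−1−q} = λ·(p−1−q)^p / ( p^{p−1}·( pq + N(p−1−q) ) ). Define u : ℝ^N → ℝ by u(x) := C·‖x−x₀‖^{α₀}. Then for every x ≠ x₀ the vector field V(y) := ‖∇u(y)‖^{p−2} ∇u(y) is differentiable at x and trace(DV(x)) = λ·u(x)^q. Thus the time-independent function (x,t) ↦ u(x) solves the dead-core equation Δ_p u − ∂_t u = λ u₊^q on (ℝ^N \ {x₀}) × ℝ and attains the critical growth rate α₀ at its zero point x₀. -/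

import Mathlib

noncomputable section

open Set Metric MeasureTheory

/-- Euclidean space `ℝ^N`. -/
abbrev Euc (N : ℕ) := EuclideanSpace ℝ (Fin N)

/-- `s₊^q`: equals `(max s 0)^q` if `s > 0` and `0` otherwise. -/
def plusPowQ (q s : ℝ) : ℝ := if 0 < s then (max s 0) ^ q else 0

/-- The spatial gradient `∇u(x,t)`. -/
def spatialGrad (N : ℕ) (u : Euc N × ℝ → ℝ) (z : Euc N × ℝ) : Euc N :=
  gradient (fun y => u (y, z.2)) z.1

/-- The vector field `V(y,t) = ‖∇u(y,t)‖^(p-2) ∇u(y,t)`. -/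
def pVF (N : ℕ) (p : ℝ) (u : Euc N × ℝ → ℝ) (z : Euc N × ℝ) : Euc N :=
  ‖spatialGrad N u z‖ ^ (p - 2) • spatialGrad N u z

/-- The `p`-Laplacian `Δ_p u` realized as `trace (D_x V)` with `V = ‖∇u‖^(p-2)∇u`. -/
def pLap (N : ℕ) (p : ℝ) (u : Euc N × ℝ → ℝ) (z : Euc N × ℝ) : ℝ :=
  LinearMap.trace ℝ (Euc N) (fderiv ℝ (fun y => pVF N p u (y, z.2)) z.1).toLinearMap

/-- The time derivative `∂ₜ u`. -/
def timeDeriv (N : ℕ) (u : Euc N × ℝ → ℝ) (z : Euc N × ℝ) : ℝ :=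
  deriv (fun t => u (z.1, t)) z.2

/-- `u` is a classical solution of the dead-core equation `Δ_p u - ∂_t u = λ₀ u₊^q` on `D`:
`u` is continuous on `D` and at every point of `D` the spatial gradient and time derivative
exist, `V = ‖∇u‖^(p-2)∇u` is spatially differentiable, and the PDE holds. -/
def IsDCSol (N : ℕ) (p q : ℝ) (lam u : Euc N × ℝ → ℝ) (D : Set (Euc N × ℝ)) : Prop :=
  ContinuousOn u D ∧
  ∀ z ∈ D,
    DifferentiableAt ℝ (fun y => u (y, z.2)) z.1 ∧
    DifferentiableAt ℝ (fun t => u (z.1, t)) z.2 ∧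
    DifferentiableAt ℝ (fun y => pVF N p u (y, z.2)) z.1 ∧
    pLap N p u z - timeDeriv N u z = lam z * plusPowQ q (u z)

/-- The intrinsic scaling exponent `θ = p(1-q)/(p-1-q)`. -/
def thetaV (p q : ℝ) : ℝ := p * (1 - q) / (p - 1 - q)

/-- The intrinsic cylinder `Q_r(x₀,t₀) = B_r(x₀) × (t₀ - r^θ, t₀ + r^θ)`. -/
def cylQ (N : ℕ) (θ r : ℝ) (z0 : Euc N × ℝ) : Set (Euc N × ℝ) :=
  (ball z0.1 r) ×ˢ (Ioo (z0.2 - r ^ θ) (z0.2 + r ^ θ))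

/-- The lower cylinder `Q_r⁻(x₀,t₀) = B_r(x₀) × (t₀ - r^θ, t₀]`. -/
def cylQm (N : ℕ) (θ r : ℝ) (z0 : Euc N × ℝ) : Set (Euc N × ℝ) :=
  (ball z0.1 r) ×ˢ (Ioc (z0.2 - r ^ θ) z0.2)

/-- The upper cylinder `Q_r⁺(x₀,t₀) = B_r(x₀) × [t₀, t₀ + r^θ)`. -/
def cylQp (N : ℕ) (θ r : ℝ) (z0 : Euc N × ℝ) : Set (Euc N × ℝ) :=
  (ball z0.1 r) ×ˢ (Ico z0.2 (z0.2 + r ^ θ))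

/-- The parabolic boundary of `Q_r⁻(x₀,t₀)`:
`(closure(B_r) × {t₀ - r^θ}) ∪ (∂B_r × (t₀ - r^θ, t₀])`. -/
def parBdryQm (N : ℕ) (θ r : ℝ) (z0 : Euc N × ℝ) : Set (Euc N × ℝ) :=
  ((closedBall z0.1 r) ×ˢ ({z0.2 - r ^ θ} : Set ℝ)) ∪
    ((sphere z0.1 r) ×ˢ (Ioc (z0.2 - r ^ θ) z0.2))

/-- The class `𝔍 = 𝔍_p(λ₀,q)(Q₁)`: classical solutions `u` on `Q₁` (for some `λ₀` with
`m ≤ λ₀ ≤ M`) with `0 ≤ u ≤ 1`, `∂ₜ u ≥ 0` on `Q₁` and `u(0,0) = 0`. -/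
def memJ (N : ℕ) (p q m M : ℝ) (u : Euc N × ℝ → ℝ) : Prop :=
  ∃ lam : Euc N × ℝ → ℝ,
    (∀ z ∈ cylQ N (thetaV p q) 1 (0, 0), m ≤ lam z ∧ lam z ≤ M) ∧
    IsDCSol N p q lam u (cylQ N (thetaV p q) 1 (0, 0)) ∧
    (∀ z ∈ cylQ N (thetaV p q) 1 (0, 0), 0 ≤ u z ∧ u z ≤ 1) ∧
    (∀ z ∈ cylQ N (thetaV p q) 1 (0, 0), 0 ≤ timeDeriv N u z) ∧
    u (0, 0) = 0

/-- `S_r[u] = sup over Q_r⁻ of u` (cylinders centered at the origin). -/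
def Sr (N : ℕ) (p q r : ℝ) (u : Euc N × ℝ → ℝ) : ℝ :=
  sSup (u '' cylQm N (thetaV p q) r (0, 0))

/-!
In dimension `N`, the flux `‖∇u‖^(p-2) ∇u` of a radial function `u(y) = φ(r)`, `r = ‖y - c‖`, is
`g(r) (y - c) / r` with `g = |φ'|^(p-2) φ'`, and the product rule gives its divergence
`g' + (N - 1) / r * g`. For `φ(r) = C r^α` this is a multiple of `r^((α - 1) (p - 1) - 1)`. The
exponent `α = p / (p - 1 - q)` solves `(α - 1) (p - 1) - 1 = α q`, and the equation for `C` matches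
the coefficients.
-/

section RadialPLaplacian

open Filter Topology RealInnerProductSpace

variable {E : Type*} [NormedAddCommGroup E] [InnerProductSpace ℝ E]

/-- The vector field `V` is differentiable at `x` with divergence `d`, the divergence being encoded
as the trace of the Fréchet derivative. -/
def HasDivergenceAt (V : E → E) (d : ℝ) (x : E) : Prop :=
  DifferentiableAt ℝ V x ∧ LinearMap.trace ℝ E (fderiv ℝ V x).toLinearMap = d

/-- The flux `‖∇u‖^(p-2) ∇u`, whose divergence is the `p`-Laplacian `Δ_p u`. -/
def pFlux [CompleteSpace E] (p : ℝ) (u : E → ℝ) (y : E) : E :=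
  ‖gradient u y‖ ^ (p - 2) • gradient u y

lemma HasDivergenceAt.congr_of_eventuallyEq {V W : E → E} {d : ℝ} {x : E}
    (hV : HasDivergenceAt V d x) (hWV : W =ᶠ[𝓝 x] V) : HasDivergenceAt W d x :=
  ⟨hV.1.congr_of_eventuallyEq hWV, by rw [hWV.fderiv_eq, hV.2]⟩

lemma hasDivergenceAt_sub_const [FiniteDimensional ℝ E] (c x : E) :
    HasDivergenceAt (fun y => y - c) (Module.finrank ℝ E) x := by
  have h : HasFDerivAt (fun y : E => y - c) (.id ℝ E) x := (hasFDerivAt_id x).sub_const c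
  exact ⟨h.differentiableAt, by rw [h.fderiv]; exact LinearMap.trace_id ℝ E⟩

lemma HasDivergenceAt.smul [CompleteSpace E] [FiniteDimensional ℝ E] {f : E → ℝ} {V : E → E}
    {f' x : E} {d : ℝ} (hf : HasGradientAt f f' x) (hV : HasDivergenceAt V d x) :
    HasDivergenceAt (fun y => f y • V y) (f x * d + ⟪f', V x⟫) x := by
  have h := hf.hasFDerivAt.fun_smul hV.1.hasFDerivAt
  refine ⟨h.differentiableAt, ?_⟩
  rw [h.fderiv, ContinuousLinearMap.toLinearMap_add, map_add, ContinuousLinearMap.toLinearMap_smul,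
    map_smul, hV.2, smul_eq_mul]
  exact congrArg (f x * d + ·) (LinearMap.trace_smulRight _ _)

section Gradient

variable [CompleteSpace E]

lemma hasGradientAt_norm_sub {c x : E} (hx : x ≠ c) :
    HasGradientAt (fun y => ‖y - c‖) (‖x - c‖⁻¹ • (x - c)) x := by
  have h_ne : ‖x - c‖ ^ 2 ≠ 0 := pow_ne_zero 2 (norm_sub_eq_zero_iff.not.mpr hx)
  have h := (((hasFDerivAt_id x).sub_const c).norm_sq).sqrt h_ne
  simp only [id, Real.sqrt_sq (norm_nonneg _)] at h
  refine hasGradientAt_iff_hasFDerivAt.mpr (h.congr_fderiv ?_)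
  ext v
  simp only [ContinuousLinearMap.comp_id, smul_apply, coe_innerSL_apply, nsmul_eq_mul,
    Nat.cast_ofNat, smul_eq_mul, map_smul, InnerProductSpace.toDual_apply_apply]
  ring

lemma hasGradientAt_comp_norm_sub {φ : ℝ → ℝ} {φ' : ℝ} {c x : E} (hx : x ≠ c)
    (hφ : HasDerivAt φ φ' ‖x - c‖) :
    HasGradientAt (fun y => φ ‖y - c‖) ((φ' / ‖x - c‖) • (x - c)) x := by
  have h := hφ.comp_hasFDerivAt x (hasGradientAt_norm_sub hx).hasFDerivAt
  refine hasGradientAt_iff_hasFDerivAt.mpr (h.congr_fderiv ?_)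
  rw [div_eq_mul_inv, mul_smul, map_smul (InnerProductSpace.toDual ℝ E) φ']

lemma pFlux_comp_norm_sub {φ : ℝ → ℝ} {φ' : ℝ} {c x : E} (p : ℝ) (hx : x ≠ c)
    (hφ : HasDerivAt φ φ' ‖x - c‖) :
    pFlux p (fun y => φ ‖y - c‖) x = (|φ'| ^ (p - 2) * φ' / ‖x - c‖) • (x - c) := by
  have h_ne : ‖x - c‖ ≠ 0 := norm_sub_eq_zero_iff.not.mpr hx
  have h_norm : ‖(φ' / ‖x - c‖) • (x - c)‖ = |φ'| := by
    rw [norm_smul, norm_div, norm_norm, Real.norm_eq_abs, div_mul_cancel₀ _ h_ne]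
  rw [pFlux, (hasGradientAt_comp_norm_sub hx hφ).gradient, h_norm, smul_smul, mul_div_assoc]

end Gradient

lemma abs_rpow_sub_two_mul_self_mul_rpow (k b p : ℝ) {s : ℝ} (hs : 0 < s) :
    |k * s ^ b| ^ (p - 2) * (k * s ^ b) = |k| ^ (p - 2) * k * s ^ (b * (p - 1)) := by
  have h_exp : s ^ (b * (p - 1)) = s ^ (b * (p - 2)) * s ^ b := by
    rw [← Real.rpow_add hs]
    ring_nf
  have h_pos : 0 < s ^ b := Real.rpow_pos_of_pos hs b
  rw [abs_mul, abs_of_pos h_pos, Real.mul_rpow (abs_nonneg k) h_pos.le, ← Real.rpow_mul hs.le,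
    h_exp]
  ring

section Divergence

variable [CompleteSpace E] [FiniteDimensional ℝ E]

lemma hasDivergenceAt_div_norm_smul {g : ℝ → ℝ} {g' : ℝ} {c x : E} (hx : x ≠ c)
    (hg : HasDerivAt g g' ‖x - c‖) :
    HasDivergenceAt (fun y => (g ‖y - c‖ / ‖y - c‖) • (y - c))
      (g' + (Module.finrank ℝ E - 1) / ‖x - c‖ * g ‖x - c‖) x := by
  have h_ne : ‖x - c‖ ≠ 0 := norm_sub_eq_zero_iff.not.mpr hx
  have h_coeff : HasGradientAt (fun y => g ‖y - c‖ / ‖y - c‖) _ x :=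
    hasGradientAt_comp_norm_sub hx (hg.fun_div (hasDerivAt_id _) h_ne)
  convert (hasDivergenceAt_sub_const c x).smul h_coeff using 1
  rw [real_inner_smul_left, real_inner_self_eq_norm_sq]
  simp only [id]
  field_simp
  ring

lemma hasDivergenceAt_pFlux_comp_norm_sub {φ φ' : ℝ → ℝ} {g' p : ℝ} {c x : E} (hx : x ≠ c)
    (hφ : ∀ᶠ s in 𝓝 ‖x - c‖, HasDerivAt φ (φ' s) s)
    (hg : HasDerivAt (fun s => |φ' s| ^ (p - 2) * φ' s) g' ‖x - c‖) :
    HasDivergenceAt (pFlux p fun y => φ ‖y - c‖)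
      (g' + (Module.finrank ℝ E - 1) / ‖x - c‖ * (|φ' ‖x - c‖| ^ (p - 2) * φ' ‖x - c‖)) x := by
  refine (hasDivergenceAt_div_norm_smul hx hg).congr_of_eventuallyEq ?_
  have h_cont : Tendsto (fun y => ‖y - c‖) (𝓝 x) (𝓝 ‖x - c‖) :=
    Continuous.tendsto (by fun_prop) x
  filter_upwards [h_cont.eventually hφ, isOpen_ne.mem_nhds hx] with y hφy hy
  exact pFlux_comp_norm_sub p hy hφy

lemma hasDivergenceAt_pFlux_norm_sub_rpow (C a p : ℝ) {c x : E} (hx : x ≠ c) :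
    HasDivergenceAt (pFlux p fun y => C * ‖y - c‖ ^ a)
      (|C * a| ^ (p - 2) * (C * a) * ((a - 1) * (p - 1) + Module.finrank ℝ E - 1) *
        ‖x - c‖ ^ ((a - 1) * (p - 1) - 1)) x := by
  have h_pos : 0 < ‖x - c‖ := norm_sub_pos_iff.mpr hx
  have hφ : ∀ᶠ s in 𝓝 ‖x - c‖, HasDerivAt (fun s => C * s ^ a) (C * a * s ^ (a - 1)) s := by
    filter_upwards [lt_mem_nhds h_pos] with s hs
    simpa only [mul_assoc] using (Real.hasDerivAt_rpow_const (.inl hs.ne')).const_mul C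
  have hg : HasDerivAt (fun s => |C * a * s ^ (a - 1)| ^ (p - 2) * (C * a * s ^ (a - 1)))
      (|C * a| ^ (p - 2) * (C * a) *
        ((a - 1) * (p - 1) * ‖x - c‖ ^ ((a - 1) * (p - 1) - 1))) ‖x - c‖ := by
    refine ((Real.hasDerivAt_rpow_const (.inl h_pos.ne')).const_mul _).congr_of_eventuallyEq ?_
    filter_upwards [lt_mem_nhds h_pos] with s hs
    exact abs_rpow_sub_two_mul_self_mul_rpow (C * a) (a - 1) p hs
  convert hasDivergenceAt_pFlux_comp_norm_sub hx hφ hg using 1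
  rw [abs_rpow_sub_two_mul_self_mul_rpow _ _ _ h_pos, Real.rpow_sub_one h_pos.ne']
  ring

end Divergence

lemma mul_div_rpow_mul_add_eq {p q d lam C : ℝ} (hp : 0 < p) (hq : q < p - 1) (hC : 0 < C)
    (hCeq : C ^ (p - 1 - q) * (p ^ (p - 1) * (p * q + d * (p - 1 - q))) =
      lam * (p - 1 - q) ^ p) :
    (C * (p / (p - 1 - q))) ^ (p - 1) * (p / (p - 1 - q) * q + d) = lam * C ^ q := by
  have hs : 0 < p - 1 - q := sub_pos.mpr hq
  have hC_split : C ^ (p - 1) = C ^ (p - 1 - q) * C ^ q := by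
    rw [← Real.rpow_add hC, sub_add_cancel]
  have hs_split : (p - 1 - q) ^ p = (p - 1 - q) ^ (p - 1) * (p - 1 - q) := by
    rw [← Real.rpow_add_one hs.ne', sub_add_cancel]
  have hs_pow : 0 < (p - 1 - q) ^ (p - 1) := Real.rpow_pos_of_pos hs _
  rw [hs_split] at hCeq
  rw [Real.mul_rpow hC.le (by positivity), Real.div_rpow hp.le hs.le, hC_split]
  field_simp
  linear_combination hCeq

/-- The equation for `C` has its denominator cleared, so that the `p`-harmonic case
`p * q + finrank ℝ E * (p - 1 - q) = 0`, `lam = 0` is not lost to division by zero. -/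
theorem radial_stationary_profile_general [CompleteSpace E] [FiniteDimensional ℝ E]
    {p q lam α C : ℝ} (hp : 0 < p) (hq : q < p - 1) (hα : α = p / (p - 1 - q)) (hC : 0 < C)
    (hCeq : C ^ (p - 1 - q) * (p ^ (p - 1) * (p * q + Module.finrank ℝ E * (p - 1 - q))) =
      lam * (p - 1 - q) ^ p)
    {c x : E} (hx : x ≠ c) :
    HasDivergenceAt (pFlux p fun y => C * ‖y - c‖ ^ α) (lam * (C * ‖x - c‖ ^ α) ^ q) x := by
  have hs : 0 < p - 1 - q := sub_pos.mpr hq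
  have hCα : 0 < C * α := by rw [hα]; positivity
  have h_exponent : (α - 1) * (p - 1) = α * q + 1 := by rw [hα]; field_simp; ring
  have h_flux : |C * α| ^ (p - 2) * (C * α) = (C * α) ^ (p - 1) := by
    rw [abs_of_pos hCα, ← Real.rpow_add_one hCα.ne']
    ring_nf
  have h_coeff : (C * α) ^ (p - 1) * (α * q + Module.finrank ℝ E) = lam * C ^ q :=
    hα ▸ mul_div_rpow_mul_add_eq hp hq hC hCeq
  convert hasDivergenceAt_pFlux_norm_sub_rpow C α p hx using 1
  rw [h_flux, h_exponent, add_sub_cancel_right, add_right_comm, add_sub_cancel_right, h_coeff,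
    Real.mul_rpow hC.le (by positivity), ← Real.rpow_mul (norm_nonneg _), mul_assoc]

end RadialPLaplacian

/-- **Explicit radial stationary dead-core/blow-up profile.** -/
theorem radial_stationary_profile
    (N : ℕ) (hN : 1 ≤ N) (p q lam : ℝ)
    (hp : 2 ≤ p) (hq0 : 0 < q) (hq1 : q < 1) (hlam : 0 < lam)
    (x0 : Euc N) (α₀ C : ℝ) (hα : α₀ = p / (p - 1 - q)) (hC : 0 < C)
    (hCeq : C ^ (p - 1 - q) =
      lam * (p - 1 - q) ^ p / (p ^ (p - 1) * (p * q + N * (p - 1 - q)))) :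
    ∀ x : Euc N, x ≠ x0 →
      DifferentiableAt ℝ (fun y : Euc N =>
        ‖gradient (fun y' : Euc N => C * ‖y' - x0‖ ^ α₀) y‖ ^ (p - 2) •
          gradient (fun y' : Euc N => C * ‖y' - x0‖ ^ α₀) y) x ∧
      LinearMap.trace ℝ (Euc N)
        (fderiv ℝ (fun y : Euc N =>
          ‖gradient (fun y' : Euc N => C * ‖y' - x0‖ ^ α₀) y‖ ^ (p - 2) •
            gradient (fun y' : Euc N => C * ‖y' - x0‖ ^ α₀) y) x).toLinearMap
        = lam * (C * ‖x - x0‖ ^ α₀) ^ q := by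
  intro x hx
  have hs : 0 < p - 1 - q := by linarith
  have hD : 0 < p ^ (p - 1) * (p * q + N * (p - 1 - q)) := by positivity
  exact radial_stationary_profile_general (by linarith) (by linarith) hα hC
    (by rwa [finrank_euclideanSpace_fin, ← eq_div_iff hD.ne']) hx
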